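/- arXiv:1712.01172 — 3 statements merged into one kernel-verified Lean document; each statement's English description precedes it below -/
import Mathlib

section
/- For every real c > 0, every natural number K, every real number a, and all real numbers b_1, …, b_K, one has (a + Σ_{k=1}^K b_k)^2 ≤ (1 + 1/c)·a^2 + (1 + 1/c)·Σ_{k=1}^K (1+c)^k·b_k^2. -/
/-!
Giving the term with index `k` the weight `(1 + c) ^ k`, with `a` as the term of index `0`, the
Cauchy–Schwarz inequality bounds the square of the sum by the weighted sum of squares times the sum
of the inverse weights. The latter is a geometric sum of ratio `(1 + c)⁻¹`, hence at most
`(1 - (1 + c)⁻¹)⁻¹ = 1 + 1 / c`.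
-/

section

variable {R : Type*} [Field R] [LinearOrder R] [IsStrictOrderedRing R]

theorem sq_sum_le_sum_inv_mul_sum_mul_sq {ι : Type*} {s : Finset ι} {w : ι → R}
    (hw : ∀ i ∈ s, 0 < w i) (f : ι → R) :
    (∑ i ∈ s, f i) ^ 2 ≤ (∑ i ∈ s, (w i)⁻¹) * ∑ i ∈ s, w i * f i ^ 2 := by
  refine Finset.sum_sq_le_sum_mul_sum_of_sq_le_mul s (fun i hi ↦ (inv_pos.2 (hw i hi)).le)
    (fun i hi ↦ mul_nonneg (hw i hi).le (sq_nonneg _)) fun i hi ↦ ?_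
  rw [inv_mul_cancel_left₀ (hw i hi).ne']

theorem sum_pow_le_inv_one_sub {x : R} (hx₀ : 0 ≤ x) (hx₁ : x < 1) (s : Finset ℕ) :
    ∑ k ∈ s, x ^ k ≤ (1 - x)⁻¹ := by
  obtain ⟨n, hsn⟩ := s.exists_nat_subset_range
  calc
    ∑ k ∈ s, x ^ k ≤ ∑ k ∈ Finset.range n, x ^ k :=
      Finset.sum_le_sum_of_subset_of_nonneg hsn fun k _ _ ↦ pow_nonneg hx₀ k
    _ ≤ (1 - x)⁻¹ := by
      simpa using geom_sum_Ico_le_of_lt_one (m := 0) (n := n) hx₀ hx₁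

theorem sum_inv_one_add_pow_le {c : R} (hc : 0 < c) (s : Finset ℕ) :
    ∑ k ∈ s, ((1 + c) ^ k)⁻¹ ≤ 1 + 1 / c := by
  have ratio_lt_one : (1 + c)⁻¹ < 1 := inv_lt_one_of_one_lt₀ (lt_add_of_pos_right 1 hc)
  calc
    ∑ k ∈ s, ((1 + c) ^ k)⁻¹ = ∑ k ∈ s, (1 + c)⁻¹ ^ k := by simp only [inv_pow]
    _ ≤ (1 - (1 + c)⁻¹)⁻¹ := sum_pow_le_inv_one_sub (by positivity) ratio_lt_one s
    _ = 1 + 1 / c := by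
      have one_sub_ratio : 1 - (1 + c)⁻¹ = c / (1 + c) := by field_simp; ring
      rw [one_sub_ratio, inv_div, add_div, div_self hc.ne', add_comm]

theorem sq_sum_le_mul_sum_one_add_pow_mul_sq {c : R} (hc : 0 < c) (s : Finset ℕ) (f : ℕ → R) :
    (∑ k ∈ s, f k) ^ 2 ≤ (1 + 1 / c) * ∑ k ∈ s, (1 + c) ^ k * f k ^ 2 :=
  calc
    (∑ k ∈ s, f k) ^ 2 ≤ (∑ k ∈ s, ((1 + c) ^ k)⁻¹) * ∑ k ∈ s, (1 + c) ^ k * f k ^ 2 :=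
      sq_sum_le_sum_inv_mul_sum_mul_sq (fun k _ ↦ by positivity) f
    _ ≤ (1 + 1 / c) * ∑ k ∈ s, (1 + c) ^ k * f k ^ 2 := by
      gcongr
      exact sum_inv_one_add_pow_le hc s

theorem weighted_binomial_inequality_general {c : R} (hc : 0 < c) {s : Finset ℕ} (hs : 0 ∉ s)
    (a : R) (b : ℕ → R) :
    (a + ∑ k ∈ s, b k) ^ 2 ≤
      (1 + 1 / c) * a ^ 2 + (1 + 1 / c) * ∑ k ∈ s, (1 + c) ^ k * b k ^ 2 := by
  let f : ℕ → R := Function.update b 0 a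
  have f_zero : f 0 = a := Function.update_self 0 a b
  have f_eq : ∀ k ∈ s, f k = b k := fun k hk ↦
    Function.update_of_ne (ne_of_mem_of_not_mem hk hs) a b
  have sum_f : ∑ k ∈ insert 0 s, f k = a + ∑ k ∈ s, b k := by
    rw [Finset.sum_insert hs, f_zero, Finset.sum_congr rfl f_eq]
  have sum_sq_f : ∑ k ∈ insert 0 s, (1 + c) ^ k * f k ^ 2 =
      a ^ 2 + ∑ k ∈ s, (1 + c) ^ k * b k ^ 2 := by
    rw [Finset.sum_insert hs, f_zero, pow_zero, one_mul,
      Finset.sum_congr rfl fun k hk ↦ by rw [f_eq k hk]]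
  rw [← mul_add, ← sum_f, ← sum_sq_f]
  exact sq_sum_le_mul_sum_one_add_pow_mul_sq hc (insert 0 s) f

end

theorem weighted_binomial_inequality
    (c : ℝ) (hc : 0 < c) (K : ℕ) (a : ℝ) (b : ℕ → ℝ) :
    (a + ∑ k ∈ Finset.Icc 1 K, b k) ^ 2 ≤
      (1 + 1 / c) * a ^ 2 +
        (1 + 1 / c) * ∑ k ∈ Finset.Icc 1 K, (1 + c) ^ k * b k ^ 2 :=
  weighted_binomial_inequality_general hc (by simp) a b
end

section
/- Let d ≥ 1, let ν ∈ ℝ^d be a unit vector, α ∈ ℝ, and let Γ be a Borel subset of the affine hyperplane H = {z ∈ ℝ^d : z·ν = α}. Let f : ℝ^d → [0,∞] be Borel measurable, let e ∈ ℝ^d be a unit vector, and let η > 0. Then ∫_{ℝ^d} ( Σ_{ξ ∈ Γ ∩ (x, x+ηe)} f(ξ) ) dx ≤ η ∫_Γ f dμ_H^{d−1}, where (x, x+ηe) = {x + tηe : t ∈ (0,1)} denotes the open segment from x to x+ηe, the inner sum is the (possibly infinite) sum of f over all intersection points, the outer integral is the Lebesgue lower integral, and μ_H^{d−1} denotes the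 (d−1)-dimensional Hausdorff measure on ℝ^d. -/
open Set MeasureTheory
open scoped RealInnerProductSpace ENNReal

open Measure Module

/-!
Slice `ℝ^d` by the hyperplanes `s • ν + νᗮ`. For `s ≠ α` a segment of direction `v` issued from a
point `x` of the slice can meet the hyperplane `⟪z, ν⟫ = α` only at `x + t • v` with
`t = (α - s) / ⟪v, ν⟫`, and `t` does not depend on `x`. So the sum over the slice integrates to at
most the surface integral of `f` over `Γ`, and to zero unless `t ∈ (0, 1)`, which happens for `s` in
a set of length `|⟪v, ν⟫|`. The inequality half of Tonelli's theorem, which holds for arbitrary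
functions, then suffices.

`μH[n]` is normalized to agree with Lebesgue measure for the sup norm, so it dominates the measure
`μHE[n]`, which agrees with Lebesgue measure for the Euclidean norm.
-/

section HausdorffMeasure

lemma volume_euclideanSpace_le_hausdorffMeasure (n : ℕ) :
    (volume : Measure (EuclideanSpace ℝ (Fin n))) ≤ μH[n] := by
  refine Measure.le_iff.2 fun A hA ↦ ?_
  have image_le := (PiLp.lipschitzWith_ofLp 2 fun _ : Fin n ↦ ℝ).hausdorffMeasure_image_le
    (d := n) (by positivity) A
  calc volume A = volume (WithLp.toLp 2 ⁻¹' A) :=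
        ((PiLp.volume_preserving_toLp (Fin n)).measure_preimage hA.nullMeasurableSet).symm
    _ = volume (WithLp.ofLp '' A) :=
        congrArg volume ((WithLp.equiv 2 (Fin n → ℝ)).image_eq_preimage_symm A).symm
    _ = μH[n] (WithLp.ofLp '' A) := by rw [← hausdorffMeasure_pi_real, Fintype.card_fin]
    _ ≤ μH[n] A := by simpa using image_le

lemma addHaarScalarFactor_volume_hausdorffMeasure_le_one (n : ℕ) :
    addHaarScalarFactor (volume : Measure (EuclideanSpace ℝ (Fin n))) μH[n] ≤ 1 := by
  set c := addHaarScalarFactor (volume : Measure (EuclideanSpace ℝ (Fin n))) μH[n]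
  let B := Metric.ball (0 : EuclideanSpace ℝ (Fin n)) 1
  have volume_eq : volume B = c * μH[n] B :=
    congrArg (· B) (isAddLeftInvariant_eq_smul volume μH[n])
  have volume_pos : 0 < volume B := Metric.measure_ball_pos volume 0 one_pos
  have volume_le : volume B ≤ μH[n] B := volume_euclideanSpace_le_hausdorffMeasure n B
  have hausdorff_ne_top : μH[n] B ≠ ∞ := fun h ↦ by
    have c_ne_zero : c ≠ 0 := addHaarScalarFactor_volume_hausdorffMeasure_ne_zero n
    exact (measure_ball_lt_top (μ := volume)).ne
      (volume_eq.trans (by rw [h, ENNReal.mul_top (by simpa)]))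
  have mul_le : c * μH[n] B ≤ 1 * μH[n] B := by rwa [← volume_eq, one_mul]
  exact_mod_cast
    (ENNReal.mul_le_mul_iff_left (volume_pos.trans_le volume_le).ne' hausdorff_ne_top).1 mul_le

lemma euclideanHausdorffMeasure_le_hausdorffMeasure {X : Type*} [EMetricSpace X]
    [MeasurableSpace X] [BorelSpace X] (n : ℕ) : (μHE[n] : Measure X) ≤ μH[n] := by
  refine Measure.le_iff'.2 fun A ↦ ?_
  rw [euclideanHausdorffMeasure_def, Measure.smul_apply, ENNReal.smul_def, smul_eq_mul]
  exact mul_le_of_le_one_left' (mod_cast addHaarScalarFactor_volume_hausdorffMeasure_le_one n)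

end HausdorffMeasure

section Slicing

variable {E : Type*} [NormedAddCommGroup E] [InnerProductSpace ℝ E] [FiniteDimensional ℝ E]
  [MeasurableSpace E] [BorelSpace E]

lemma lintegral_le_lintegral_lintegral_orthogonal (K : Submodule ℝ E) (F : E → ℝ≥0∞) :
    ∫⁻ x, F x ≤ ∫⁻ u : K, ∫⁻ w : Kᗮ, F (u + w) := by
  have decomposition := (K.measurePreserving_measurableEquivProd (0 : E)).symm
  rw [InnerProductSpace.euclideanHausdorffMeasure_eq_volume] at decomposition
  rw [MeasurePreserving.lintegral_map_equiv F _ decomposition]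
  simpa [volume_eq_prod] using
    lintegral_prod_le (μ := volume) (ν := volume) fun p : K × Kᗮ ↦ F (p.1 + p.2)

lemma lintegral_le_lintegral_lintegral_orthogonal_span_singleton {ν : E} (hν : ‖ν‖ = 1)
    (F : E → ℝ≥0∞) : ∫⁻ x, F x ≤ ∫⁻ s : ℝ, ∫⁻ y : (ℝ ∙ ν)ᗮ, F (s • ν + y) := by
  refine (lintegral_le_lintegral_lintegral_orthogonal (ℝ ∙ ν) F).trans_eq ?_
  let line := LinearIsometryEquiv.toSpanUnitSingleton (𝕜 := ℝ) ν hν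
  rw [MeasurePreserving.lintegral_map_equiv _ line.toMeasurableEquiv line.measurePreserving]
  simp [line]

lemma lintegral_add_coe_le_lintegral_euclideanHausdorffMeasure (K : Submodule ℝ E) (a : E)
    (F : E → ℝ≥0∞) : ∫⁻ y : K, F (a + y) ≤ ∫⁻ x, F x ∂μHE[finrank ℝ K] := by
  have isometry_add : Isometry fun y : K ↦ a + y := (isometry_add_left a).comp isometry_subtype_coe
  calc ∫⁻ y : K, F (a + y) = ∫⁻ x, F x ∂(μHE[finrank ℝ K].map fun y : K ↦ a + y) := by
        rw [isometry_add.isClosedEmbedding.measurableEmbedding.lintegral_map,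
          InnerProductSpace.euclideanHausdorffMeasure_eq_volume]
    _ ≤ ∫⁻ x, F x ∂μHE[finrank ℝ K] := by
        rw [isometry_add.map_euclideanHausdorffMeasure]
        exact setLIntegral_le_lintegral _ _

end Slicing

section Crossing

variable {E : Type*} [AddCommGroup E] [Module ℝ E] {ℓ : E →ₗ[ℝ] ℝ} {x v ξ : E}

lemma mem_Ioo_and_eq_add_smul_of_mem_openSegment (hξ : ξ ∈ openSegment ℝ x (x + v))
    (hne : ℓ x ≠ ℓ ξ) :
    (ℓ ξ - ℓ x) / ℓ v ∈ Ioo (0 : ℝ) 1 ∧ ξ = x + ((ℓ ξ - ℓ x) / ℓ v) • v := by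
  obtain ⟨t, ht, rfl⟩ := openSegment_eq_image' ℝ x (x + v) ▸ hξ
  have hv : ℓ v ≠ 0 := fun h ↦ hne (by simp [h])
  have time_eq : (ℓ (x + t • (x + v - x)) - ℓ x) / ℓ v = t := by simp [hv]
  rw [time_eq]
  exact ⟨ht, by simp⟩

lemma tsum_inter_openSegment_le {Γ : Set E} {α : ℝ} (hΓ : ∀ z ∈ Γ, ℓ z = α) (f : E → ℝ≥0∞)
    (hx : ℓ x ≠ α) :
    ∑' ξ : (Γ ∩ openSegment ℝ x (x + v) : Set E), f ξ ≤
      (Ioo 0 1).indicator (fun t : ℝ ↦ Γ.indicator f (x + t • v)) ((α - ℓ x) / ℓ v) := by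
  have crossing : ∀ ξ ∈ Γ ∩ openSegment ℝ x (x + v),
      (α - ℓ x) / ℓ v ∈ Ioo (0 : ℝ) 1 ∧ ξ = x + ((α - ℓ x) / ℓ v) • v := fun ξ hξ ↦
    hΓ ξ hξ.1 ▸ mem_Ioo_and_eq_add_smul_of_mem_openSegment hξ.2 (hΓ ξ hξ.1 ▸ hx)
  obtain h_empty | ⟨ξ, hξ⟩ := (Γ ∩ openSegment ℝ x (x + v)).eq_empty_or_nonempty
  · simp [h_empty]
  · obtain ⟨time_mem, ξ_eq⟩ := crossing ξ hξ
    have subset_singleton : Γ ∩ openSegment ℝ x (x + v) ⊆ {ξ} := fun ζ hζ ↦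
      (crossing ζ hζ).2.trans ξ_eq.symm
    rw [indicator_of_mem time_mem, ← ξ_eq, indicator_of_mem hξ.1]
    exact (ENNReal.tsum_mono_subtype f subset_singleton).trans_eq (tsum_singleton ξ f)

end Crossing

-- For `c = 0` the quotient is `0 ∉ Ioo 0 1`, so the set is empty.
lemma volume_preimage_sub_div_Ioo_zero_one (α c : ℝ) :
    volume ((fun s ↦ (α - s) / c) ⁻¹' Ioo 0 1) = ENNReal.ofReal |c| := by
  obtain rfl | hc := eq_or_ne c 0
  · simp
  · calc volume ((α - ·) ⁻¹' ((· * c⁻¹) ⁻¹' Ioo 0 1)) = volume ((· * c⁻¹) ⁻¹' Ioo 0 1) :=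
          (volume.measurePreserving_sub_left α).measure_preimage (by measurability)
      _ = ENNReal.ofReal |c| := by simp [Real.volume_preimage_mul_right (inv_ne_zero hc)]

section JumpTrace

variable {E : Type*} [NormedAddCommGroup E] [InnerProductSpace ℝ E] [FiniteDimensional ℝ E]
  [MeasurableSpace E] [BorelSpace E] {ν : E} {α : ℝ} {Γ : Set E}

lemma lintegral_slice_tsum_inter_openSegment_le (hν : ‖ν‖ = 1)
    (hΓ : Γ ⊆ {z | ⟪z, ν⟫ = α}) (f : E → ℝ≥0∞) (v : E) {s : ℝ} (hs : s ≠ α) :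
    ∫⁻ y : (ℝ ∙ ν)ᗮ, ∑' ξ : (Γ ∩ openSegment ℝ (s • ν + y) (s • ν + y + v) : Set E), f ξ ≤
      ((fun s ↦ (α - s) / ⟪v, ν⟫) ⁻¹' Ioo 0 1).indicator
        (fun _ ↦ ∫⁻ ξ in Γ, f ξ ∂μHE[finrank ℝ (ℝ ∙ ν)ᗮ]) s := by
  set t := (α - s) / ⟪v, ν⟫
  have inner_slice (y : (ℝ ∙ ν)ᗮ) : ⟪s • ν + y, ν⟫ = s := by
    have : ⟪(y : E), ν⟫ = 0 := Submodule.mem_orthogonal_singleton_iff_inner_left.1 y.2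
    simp [inner_add_left, inner_smul_left, hν, this]
  have sum_le (y : (ℝ ∙ ν)ᗮ) :
      ∑' ξ : (Γ ∩ openSegment ℝ (s • ν + y) (s • ν + y + v) : Set E), f ξ ≤
        (Ioo 0 1).indicator (fun r : ℝ ↦ Γ.indicator f (s • ν + r • v + y)) t := by
    have crossing_le := tsum_inter_openSegment_le (ℓ := (innerₗ E).flip ν) (v := v) hΓ f
      (ne_of_eq_of_ne (inner_slice y) hs)
    simp only [LinearMap.flip_apply, innerₗ_apply_apply, inner_slice] at crossing_le
    simpa only [add_right_comm] using crossing_le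
  refine (lintegral_mono sum_le).trans ?_
  by_cases ht : t ∈ Ioo 0 1
  · have s_mem : s ∈ (fun r ↦ (α - r) / ⟪v, ν⟫) ⁻¹' Ioo 0 1 := ht
    simp only [indicator_of_mem ht, indicator_of_mem s_mem]
    exact (lintegral_add_coe_le_lintegral_euclideanHausdorffMeasure _ _ _).trans
      (lintegral_indicator_le f Γ)
  · simp [indicator_of_notMem ht]

theorem jump_trace_estimate_hyperplane_general (hν : ‖ν‖ = 1) (hΓ : Γ ⊆ {z | ⟪z, ν⟫ = α})
    (f : E → ℝ≥0∞) (v : E) :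
    ∫⁻ x, ∑' ξ : (Γ ∩ openSegment ℝ x (x + v) : Set E), f ξ ≤
      ENNReal.ofReal |⟪v, ν⟫| * ∫⁻ ξ in Γ, f ξ ∂μHE[finrank ℝ E - 1] := by
  have finrank_slice : finrank ℝ (ℝ ∙ ν)ᗮ = finrank ℝ E - 1 := by
    have := (ℝ ∙ ν).finrank_add_finrank_orthogonal
    rw [finrank_span_singleton (norm_ne_zero_iff.1 (by simp [hν]))] at this
    omega
  rw [← finrank_slice, ← volume_preimage_sub_div_Ioo_zero_one α, mul_comm]
  calc _ ≤ ∫⁻ s : ℝ, ∫⁻ y : (ℝ ∙ ν)ᗮ,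
          ∑' ξ : (Γ ∩ openSegment ℝ (s • ν + y) (s • ν + y + v) : Set E), f ξ :=
        lintegral_le_lintegral_lintegral_orthogonal_span_singleton hν _
    _ ≤ ∫⁻ s : ℝ, ((fun s ↦ (α - s) / ⟪v, ν⟫) ⁻¹' Ioo 0 1).indicator
          (fun _ ↦ ∫⁻ ξ in Γ, f ξ ∂μHE[finrank ℝ (ℝ ∙ ν)ᗮ]) s := by
        refine lintegral_mono_ae ?_
        filter_upwards [volume.ae_ne α] with s hs
        exact lintegral_slice_tsum_inter_openSegment_le hν hΓ f v hs
    _ ≤ _ := lintegral_indicator_const_le _ _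

end JumpTrace

theorem jump_trace_estimate_hyperplane
    (d : ℕ) (hd : 1 ≤ d)
    (ν : EuclideanSpace ℝ (Fin d)) (hν : ‖ν‖ = 1) (α : ℝ)
    (Γ : Set (EuclideanSpace ℝ (Fin d)))
    (hΓH : Γ ⊆ {z : EuclideanSpace ℝ (Fin d) | ⟪z, ν⟫ = α})
    (hΓm : MeasurableSet Γ)
    (f : EuclideanSpace ℝ (Fin d) → ℝ≥0∞) (hf : Measurable f)
    (e : EuclideanSpace ℝ (Fin d)) (he : ‖e‖ = 1) (η : ℝ) (hη : 0 < η) :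
    ∫⁻ x, ∑' ξ : (Γ ∩ openSegment ℝ x (x + η • e) : Set (EuclideanSpace ℝ (Fin d))), f ξ
      ≤ ENNReal.ofReal η * ∫⁻ ξ in Γ, f ξ ∂(μH[(d : ℝ) - 1]) := by
  have inner_le : |⟪η • e, ν⟫| ≤ η := by
    simpa [norm_smul, he, hν, abs_of_pos hη] using abs_real_inner_le_norm (η • e) ν
  have measure_le : (μHE[finrank ℝ (EuclideanSpace ℝ (Fin d)) - 1] : Measure _) ≤
      (μH[(d : ℝ) - 1] : Measure (EuclideanSpace ℝ (Fin d))) := by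
    simpa [hd] using euclideanHausdorffMeasure_le_hausdorffMeasure (d - 1)
  refine (jump_trace_estimate_hyperplane_general hν hΓH f (η • e)).trans ?_
  gcongr
end

section
/- Let d ≥ 1, let Q ⊂ ℝ^d be a bounded measurable set with R = diam Q > 0, let c > 0 and A, B ∈ [0,∞), and let v : ℝ^d → ℝ be measurable. Assume that for every unit vector e ∈ ℝ^d and every η ∈ (0, R]: ∫_Q |v(x) − v(x+ηe)|^2 dx ≤ η·(1 + 1/c)·(η·A + B). Then for every s ∈ [0, 1/2): ∫_Q ∫_Q |v(x) − v(y)|^2 / ‖x−y‖^{d+2s} dx dy ≤ (1 + 1/c)·max(R,1)·σ_{d−1}·(R^{1−2s}/(1−2s))·(A + B), where the double integral is taken over pairs x ≠ y and σ_{d−1} denotes the surface measure of the unit sphere 𝕊^{d−1} ⊂ ℝ^d. -/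
open Set MeasureTheory
open scoped ENNReal

/-!
Substituting `y = x + z` and exchanging the integrals, the shift estimate bounds the seminorm by
`∫_{0 < ‖z‖ ≤ R} M ‖z‖ ^ (1 - d - 2s) dz` with `M = (1 + 1/c) max(R, 1) (A + B)`, which in polar
coordinates is `M σ R ^ (1 - 2s) / (1 - 2s)`, where `σ` is the mass of the cone measure
`Measure.toSphere`.

It remains to compare `σ` with the Hausdorff measure of the sphere. Mathlib's `μH[n]` is the
unnormalised `∑ diam ^ n`, so only `σ ≤ μH[n]` can be expected, and it suffices that a subset `T`
of the sphere of small diameter has cone measure at most `(1 + o(1)) (diam T) ^ n`. Projecting the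
cone over `T` centrally onto the tangent hyperplane at a point of `T` distorts distances by a factor
`1 + o(1)`, and the cone over a set `G` in the hyperplane at height one has volume `|G| / (n + 1)`
with `|G| ≤ (diam G) ^ n`.
-/

open scoped NNReal Pointwise

lemma setLIntegral_Ioc_rpow {a R : ℝ} (ha : -1 < a) (hR : 0 ≤ R) :
    ∫⁻ r in Ioc 0 R, ENNReal.ofReal (r ^ a) = ENNReal.ofReal (R ^ (a + 1) / (a + 1)) := by
  rw [← ofReal_integral_eq_lintegral_ofReal (intervalIntegral.intervalIntegrable_rpow' ha).1,
    ← intervalIntegral.integral_of_le hR, integral_rpow (.inl ha),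
    Real.zero_rpow (by linarith), sub_zero]
  filter_upwards [ae_restrict_mem measurableSet_Ioc] with r hr using Real.rpow_nonneg hr.1.le a

section CentralProjection

variable {F : Type*} [NormedAddCommGroup F]

lemma le_fst_of_mem_closedBall {q : ℝ} {p : ℝ × F}
    (hp : p ∈ Metric.closedBall ((1 : ℝ), (0 : F)) (1 - q)) : q ≤ p.1 := by
  have := (le_abs_self _).trans ((norm_fst_le _).trans (mem_closedBall_iff_norm'.1 hp))
  simp only [Prod.fst_sub] at this
  linarith

variable [NormedSpace ℝ F]

/-- The central (gnomonic) projection of `ℝ × F` from the origin onto the hyperplane `{1} × F`,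
identified with `F`. It describes cones through their cross-section at height one; at height
`p.1 = 0`, where the projection does not exist, its value is `0`. -/
noncomputable def centralProjection (p : ℝ × F) : F := p.1⁻¹ • p.2

lemma centralProjection_smul {ρ : ℝ} (hρ : ρ ≠ 0) (p : ℝ × F) :
    centralProjection (ρ • p) = centralProjection p := by
  simp [centralProjection, smul_smul, hρ, mul_comm]

lemma lipschitzOnWith_centralProjection {q : ℝ≥0} (hq : 0 < q) :
    LipschitzOnWith (q⁻¹ ^ 2) (centralProjection (F := F))
      (Metric.closedBall ((1 : ℝ), (0 : F)) (1 - q)) := by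
  refine LipschitzOnWith.of_dist_le_mul fun x hx y hy ↦ ?_
  have hx₁ := le_fst_of_mem_closedBall hx
  have hy₁ := le_fst_of_mem_closedBall hy
  have hy₂ : ‖y.2‖ ≤ 1 - q := by
    simpa using (norm_snd_le _).trans (mem_closedBall_iff_norm.1 hy)
  have hq' : (0 : ℝ) < q := hq
  have hx₀ : 0 < x.1 := hq'.trans_le hx₁
  have hy₀ : 0 < y.1 := hq'.trans_le hy₁
  -- The height error only multiplies the horizontal part of `y`, which is small near `(1, 0)`.
  have split : centralProjection x - centralProjection y =
      x.1⁻¹ • (x.2 - y.2) + (x.1⁻¹ * y.1⁻¹ * (y.1 - x.1)) • y.2 := by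
    rw [show x.1⁻¹ * y.1⁻¹ * (y.1 - x.1) = x.1⁻¹ - y.1⁻¹ by field_simp]
    simp only [centralProjection]
    module
  rw [dist_eq_norm, dist_eq_norm, split]
  calc ‖x.1⁻¹ • (x.2 - y.2) + (x.1⁻¹ * y.1⁻¹ * (y.1 - x.1)) • y.2‖
      ≤ x.1⁻¹ * ‖x.2 - y.2‖ + x.1⁻¹ * y.1⁻¹ * |x.1 - y.1| * ‖y.2‖ := by
        refine (norm_add_le _ _).trans_eq ?_
        simp [norm_smul, abs_of_pos, hx₀, hy₀, abs_sub_comm]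
    _ ≤ (q : ℝ)⁻¹ * ‖x - y‖ + (q : ℝ)⁻¹ * (q : ℝ)⁻¹ * ‖x - y‖ * (1 - q) := by
        gcongr
        exacts [norm_snd_le (x - y), norm_fst_le (x - y)]
    _ = ↑(q⁻¹ ^ 2) * ‖x - y‖ := by push_cast; field_simp; ring

variable [FiniteDimensional ℝ F] [MeasurableSpace F] [BorelSpace F]

lemma measure_cone_le (ν : Measure F) [ν.IsAddHaarMeasure] (G : Set F) :
    (volume.prod ν) {p : ℝ × F | p.1 ∈ Ioo 0 1 ∧ centralProjection p ∈ G} ≤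
      ν G / (Module.finrank ℝ F + 1) := by
  set n := Module.finrank ℝ F
  have slice : ∀ t ∈ Ioo (0 : ℝ) 1,
      ν {w | centralProjection (t, w) ∈ toMeasurable ν G} = ENNReal.ofReal (t ^ n) * ν G := by
    intro t ht
    have : {w | centralProjection (t, w) ∈ toMeasurable ν G} = t • toMeasurable ν G :=
      preimage_smul_inv₀ ht.1.ne' _
    rw [this, Measure.addHaar_smul_of_nonneg _ ht.1.le, measure_toMeasurable,
      ENNReal.ofReal_pow ht.1.le]
  have height_integral : ∫⁻ t in Ioo (0 : ℝ) 1, ENNReal.ofReal (t ^ n) = (n + 1 : ℝ≥0∞)⁻¹ := by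
    have := setLIntegral_Ioc_rpow (a := n) (by linarith [n.cast_nonneg (α := ℝ)]) zero_le_one
    simp only [Real.rpow_natCast, Real.one_rpow, one_div] at this
    rw [restrict_Ioo_eq_restrict_Ioc, this, ENNReal.ofReal_inv_of_pos (by positivity)]
    norm_cast
  have measurableSet_hull : MeasurableSet
      {p : ℝ × F | p.1 ∈ Ioo 0 1 ∧ centralProjection p ∈ toMeasurable ν G} := by
    have : Measurable (centralProjection (F := F)) := by unfold centralProjection; fun_prop
    exact (measurable_fst measurableSet_Ioo).inter (this (measurableSet_toMeasurable ν G))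
  calc (volume.prod ν) {p : ℝ × F | p.1 ∈ Ioo 0 1 ∧ centralProjection p ∈ G}
      ≤ (volume.prod ν) {p : ℝ × F | p.1 ∈ Ioo 0 1 ∧ centralProjection p ∈ toMeasurable ν G} :=
        measure_mono fun p hp ↦ ⟨hp.1, subset_toMeasurable ν G hp.2⟩
    _ = ∫⁻ t in Ioo (0 : ℝ) 1, ν {w | centralProjection (t, w) ∈ toMeasurable ν G} := by
        rw [Measure.prod_apply measurableSet_hull, ← lintegral_indicator measurableSet_Ioo]
        congr with t
        change ν {w | t ∈ Ioo (0 : ℝ) 1 ∧ centralProjection (t, w) ∈ toMeasurable ν G} = _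
        by_cases ht : t ∈ Ioo (0 : ℝ) 1
        · simp only [ht, true_and, indicator_of_mem]
        · simp only [ht, false_and, ofPred_false, measure_empty, not_false_eq_true,
            indicator_of_notMem]
    _ = ν G / (n + 1) := by
        rw [setLIntegral_congr_fun measurableSet_Ioo slice,
          lintegral_mul_const _ (by fun_prop), height_integral, mul_comm, div_eq_mul_inv]

end CentralProjection

section Sphere

variable {E : Type*} [NormedAddCommGroup E] [InnerProductSpace ℝ E] [FiniteDimensional ℝ E]
  [MeasurableSpace E] [BorelSpace E] {n : ℕ}

lemma exists_linearMap_measurePreserving_prod (hn : Module.finrank ℝ E = n + 1)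
    {e : E} (he : ‖e‖ = 1) :
    ∃ f : E →ₗ[ℝ] ℝ × (Fin n → ℝ), MeasurePreserving f ∧ f e = (1, 0) ∧ ∀ x, ‖f x‖ ≤ ‖x‖ := by
  have horth : Orthonormal ℝ (({0} : Set (Fin (n + 1))).domRestrict fun _ ↦ e) := by
    simp [he, Set.domRestrict]
  obtain ⟨b, hb⟩ := horth.exists_orthonormalBasis_extension_of_card_eq (by simpa using hn)
  have hb₀ : b 0 = e := hb 0 rfl
  let coords : E →ₗ[ℝ] ℝ × (Fin n → ℝ) :=
    { toFun x := (b.repr x 0, fun i ↦ b.repr x i.succ)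
      map_add' := by intros; ext <;> simp
      map_smul' := by intros; ext <;> simp }
  refine ⟨coords, ?_, ?_, fun x ↦ ?_⟩
  · exact (volume_preserving_piFinSuccAbove (fun _ : Fin (n + 1) ↦ ℝ) 0).comp
      ((PiLp.volume_preserving_ofLp _).comp b.measurePreserving_repr)
  · ext <;> simp [coords, ← hb₀]
  · have coord_le (i) : ‖b.repr x i‖ ≤ ‖x‖ := by
      simpa using PiLp.norm_apply_le (b.repr x) i
    exact max_le (coord_le 0) ((pi_norm_le_iff_of_nonneg (norm_nonneg x)).2 fun i ↦ coord_le _)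

lemma volume_Ioo_smul_le_ediam_pow (hn : Module.finrank ℝ E = n + 1) {q : ℝ≥0} (hq : 0 < q)
    {e : E} (he : ‖e‖ = 1) {T : Set E} (hT : T ⊆ Metric.sphere 0 1)
    (hTe : T ⊆ Metric.closedBall e (1 - q)) :
    volume (Ioo (0 : ℝ) 1 • T) ≤ (↑(q⁻¹ ^ 2) * Metric.ediam T) ^ n / (n + 1) := by
  obtain ⟨f, f_preserving, fe, f_le⟩ := exists_linearMap_measurePreserving_prod hn he
  have f_lipschitz : LipschitzWith 1 f :=
    AddMonoidHomClass.lipschitz_of_bound_nnnorm f 1 (by simpa using! f_le)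
  have f_maps : MapsTo f T (Metric.closedBall (1, 0) (1 - q)) := fun x hx ↦
    fe ▸ (f_lipschitz.dist_le_mul x e).trans (by simpa using hTe hx)
  have proj_lipschitz : LipschitzOnWith (q⁻¹ ^ 2) (centralProjection ∘ f) T := by
    simpa using (lipschitzOnWith_centralProjection hq).comp f_lipschitz.lipschitzOnWith f_maps
  have cone_subset : Ioo (0 : ℝ) 1 • T ⊆
      f ⁻¹' {p | p.1 ∈ Ioo 0 1 ∧ centralProjection p ∈ (centralProjection ∘ f) '' T} := by
    rintro _ ⟨ρ, hρ, x, hx, rfl⟩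
    have height_pos : 0 < (f x).1 :=
      (NNReal.coe_pos.2 hq).trans_le (le_fst_of_mem_closedBall (f_maps hx))
    have height_le : (f x).1 ≤ 1 := calc
      (f x).1 ≤ ‖f x‖ := (Real.le_norm_self _).trans (norm_fst_le _)
      _ ≤ ‖x‖ := f_le x
      _ = 1 := by simpa using hT hx
    refine ⟨?_, x, hx, ?_⟩
    · simpa using ⟨mul_pos hρ.1 height_pos, by nlinarith [hρ.1, hρ.2]⟩
    · simp [centralProjection_smul hρ.1.ne']
  calc volume (Ioo (0 : ℝ) 1 • T)
      ≤ volume {p | p.1 ∈ Ioo 0 1 ∧ centralProjection p ∈ (centralProjection ∘ f) '' T} := by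
        grw [cone_subset, Measure.le_map_apply f_preserving.aemeasurable, f_preserving.map_eq]
    _ ≤ volume ((centralProjection ∘ f) '' T) / (n + 1) := by
        simpa only [Module.finrank_fin_fun] using!
          measure_cone_le volume ((centralProjection ∘ f) '' T)
    _ ≤ Metric.ediam ((centralProjection ∘ f) '' T) ^ n / (n + 1) := by
        grw [Real.volume_pi_le_diam_pow, Fintype.card_fin]
    _ ≤ (↑(q⁻¹ ^ 2) * Metric.ediam T) ^ n / (n + 1) := by
        gcongr
        refine Metric.ediam_image_le_iff.2 fun x hx y hy ↦ (proj_lipschitz hx hy).trans ?_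
        gcongr
        exact Metric.edist_le_ediam_of_mem hx hy

lemma toSphere_le_ediam_pow (hn : Module.finrank ℝ E = n + 1) {q : ℝ≥0} (hq : 0 < q)
    (hq_le : q ≤ 1) {s : Set (Metric.sphere (0 : E) 1)} (hs : Metric.ediam s ≤ 1 - q) :
    (volume : Measure E).toSphere s ≤ (↑(q⁻¹ ^ 2) * Metric.ediam s) ^ n := by
  rcases s.eq_empty_or_nonempty with rfl | ⟨e, he⟩
  · simp
  set T : Set E := (↑) '' closure s
  have ediam_T : Metric.ediam T = Metric.ediam s := by
    rw [isometry_subtype_coe.ediam_image, Metric.ediam_closure]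
  have T_subset_sphere : T ⊆ Metric.sphere 0 1 := image_subset_iff.2 fun x _ ↦ x.2
  have T_subset_closedBall : T ⊆ Metric.closedBall (e : E) (1 - q) := by
    intro x hx
    have edist_le : edist x e ≤ 1 - q :=
      (Metric.edist_le_ediam_of_mem hx (mem_image_of_mem _ (subset_closure he))).trans
        (ediam_T.trans_le hs)
    rwa [← ENNReal.ofReal_one, ← ENNReal.ofReal_coe_nnreal, ← ENNReal.ofReal_sub 1 q.coe_nonneg,
      edist_le_ofReal (sub_nonneg.2 (NNReal.coe_le_one.2 hq_le))] at edist_le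
  calc (volume : Measure E).toSphere s
      ≤ (volume : Measure E).toSphere (closure s) := measure_mono subset_closure
    _ = (n + 1) * volume (Ioo (0 : ℝ) 1 • T) := by
        rw [Measure.toSphere_apply' _ isClosed_closure.measurableSet, hn, Nat.cast_add_one]
    _ ≤ (n + 1) * ((↑(q⁻¹ ^ 2) * Metric.ediam T) ^ n / (n + 1)) := by
        grw [volume_Ioo_smul_le_ediam_pow hn hq (norm_eq_of_mem_sphere e) T_subset_sphere
          T_subset_closedBall]
    _ = (↑(q⁻¹ ^ 2) * Metric.ediam s) ^ n := by
        rw [ediam_T, ENNReal.mul_div_cancel (by simp) (by simp)]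

lemma toSphere_le_hausdorffMeasure [Nontrivial E] :
    (volume : Measure E).toSphere ≤ μH[(Module.finrank ℝ E : ℝ) - 1] := by
  obtain ⟨n, hn⟩ := Nat.exists_eq_add_one.2 (Module.finrank_pos (R := ℝ) (M := E))
  have scaled_le : ∀ q ∈ Ioo (0 : ℝ≥0) 1,
      (↑((q ^ 2) ^ n) : ℝ≥0∞) • (volume : Measure E).toSphere ≤ μH[n] := by
    intro q hq
    refine Measure.le_hausdorffMeasure n _ (1 - q) (by simpa using hq.2) fun s hs ↦ ?_
    rw [Measure.smul_apply, smul_eq_mul, ENNReal.rpow_natCast]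
    grw [toSphere_le_ediam_pow hn hq.1 hq.2.le hs]
    rw [ENNReal.coe_pow, ← mul_pow, ← mul_assoc, ← ENNReal.coe_mul, ← mul_pow,
      mul_inv_cancel₀ hq.1.ne', one_pow, ENNReal.coe_one, one_mul]
  have scale_tendsto : Filter.Tendsto (fun q : ℝ≥0 ↦ (↑((q ^ 2) ^ n) : ℝ≥0∞))
      (nhdsWithin 1 (Iio 1)) (nhds 1) := by
    have : Continuous fun q : ℝ≥0 ↦ (↑((q ^ 2) ^ n) : ℝ≥0∞) := by fun_prop
    simpa using (this.tendsto 1).mono_left nhdsWithin_le_nhds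
  rw [hn, Nat.cast_add_one, add_sub_cancel_right]
  refine Measure.le_iff'.2 fun s ↦ ?_
  have scaled_tendsto := ENNReal.Tendsto.mul_const (b := (volume : Measure E).toSphere s)
    scale_tendsto (.inl one_ne_zero)
  rw [one_mul] at scaled_tendsto
  have : (nhdsWithin (1 : ℝ≥0) (Iio 1)).NeBot := nhdsLT_neBot_of_exists_lt ⟨0, zero_lt_one⟩
  refine le_of_tendsto scaled_tendsto ?_
  filter_upwards [Ioo_mem_nhdsLT zero_lt_one] with q hq using Measure.le_iff'.1 (scaled_le q hq) s

lemma toSphere_univ_le_hausdorffMeasure_sphere [Nontrivial E] :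
    (volume : Measure E).toSphere univ ≤
      μH[(Module.finrank ℝ E : ℝ) - 1] (Metric.sphere (0 : E) 1) := by
  have dim_nonneg : 0 ≤ (Module.finrank ℝ E : ℝ) - 1 :=
    sub_nonneg.2 (Nat.one_le_cast.2 Module.finrank_pos)
  grw [toSphere_le_hausdorffMeasure,
    ← isometry_subtype_coe.hausdorffMeasure_image (.inl dim_nonneg), image_univ, Subtype.range_coe]

end Sphere

section Shift

variable {E : Type*} [NormedAddCommGroup E] [SecondCountableTopology E] [MeasurableSpace E]
  [BorelSpace E] (μ : Measure E) [SFinite μ] [μ.IsAddLeftInvariant]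

lemma setLIntegral_setLIntegral_diff_singleton_le {Q : Set E} (hQ : Bornology.IsBounded Q)
    {R : ℝ} (hR : Metric.diam Q ≤ R) {k : E → E → ℝ≥0∞} (hk : Measurable (Function.uncurry k)) :
    ∫⁻ x in Q, ∫⁻ y in Q \ {x}, k x y ∂μ ∂μ ≤
      ∫⁻ z in {z | ‖z‖ ∈ Ioc 0 R}, ∫⁻ x in Q, k x (x + z) ∂μ ∂μ := by
  have inner_le : ∀ x ∈ closure Q,
      ∫⁻ y in Q \ {x}, k x y ∂μ ≤ ∫⁻ z in {z | ‖z‖ ∈ Ioc 0 R}, k x (x + z) ∂μ := by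
    intro x hx
    have shift_mem : Q \ {x} ⊆ (fun z ↦ x + z) '' {z | ‖z‖ ∈ Ioc 0 R} := by
      rintro y ⟨hy, hyx⟩
      have : dist y x ≤ R := (Metric.dist_le_diam_of_mem hQ.closure (subset_closure hy) hx).trans
        (Metric.diam_closure Q ▸ hR)
      exact ⟨y - x, ⟨norm_pos_iff.2 (sub_ne_zero.2 hyx), dist_eq_norm y x ▸ this⟩,
        add_sub_cancel x y⟩
    calc ∫⁻ y in Q \ {x}, k x y ∂μ
        ≤ ∫⁻ y in (fun z ↦ x + z) '' {z | ‖z‖ ∈ Ioc 0 R}, k x y ∂μ := lintegral_mono_set shift_mem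
      _ = ∫⁻ z in {z | ‖z‖ ∈ Ioc 0 R}, k x (x + z) ∂μ :=
        ((measurePreserving_add_left μ x).setLIntegral_comp_emb
          (measurableEmbedding_addLeft x) _ _).symm
  -- For a nonmeasurable `Q`, `μ.restrict Q` may charge `Qᶜ`, but not the complement of `closure Q`.
  have ae_mem_closure : ∀ᵐ x ∂μ.restrict Q, x ∈ closure Q :=
    ae_mono (Measure.restrict_mono subset_closure le_rfl)
      (ae_restrict_mem isClosed_closure.measurableSet)
  calc ∫⁻ x in Q, ∫⁻ y in Q \ {x}, k x y ∂μ ∂μ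
      ≤ ∫⁻ x in Q, ∫⁻ z in {z | ‖z‖ ∈ Ioc 0 R}, k x (x + z) ∂μ ∂μ :=
        lintegral_mono_ae (ae_mem_closure.mono inner_le)
    _ = ∫⁻ z in {z | ‖z‖ ∈ Ioc 0 R}, ∫⁻ x in Q, k x (x + z) ∂μ ∂μ :=
        lintegral_lintegral_swap
          (hk.comp (measurable_fst.prodMk (measurable_fst.add measurable_snd))).aemeasurable

end Shift

section Polar

variable {E : Type*} [NormedAddCommGroup E] [NormedSpace ℝ E] [FiniteDimensional ℝ E]
  [MeasurableSpace E] [BorelSpace E] (μ : Measure E) [μ.IsAddHaarMeasure]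

lemma lintegral_fun_norm_addHaar [Nontrivial E] {f : ℝ → ℝ≥0∞} (hf : Measurable f) :
    ∫⁻ x, f ‖x‖ ∂μ = μ.toSphere univ *
      ∫⁻ r in Ioi (0 : ℝ), ENNReal.ofReal (r ^ (Module.finrank ℝ E - 1)) * f r := by
  calc ∫⁻ x, f ‖x‖ ∂μ = ∫⁻ x : ({0}ᶜ : Set E), f ‖x.1‖ ∂(μ.comap (↑)) := by
        rw [lintegral_subtype_comap (measurableSet_singleton _).compl fun x ↦ f ‖x‖,
          restrict_compl_singleton]
    _ = ∫⁻ p, f p.2 ∂μ.toSphere.prod (.volumeIoiPow (Module.finrank ℝ E - 1)) := by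
        simpa using μ.measurePreserving_homeomorphUnitSphereProd.lintegral_comp_emb
          (Homeomorph.measurableEmbedding _) (f ∘ Subtype.val ∘ Prod.snd)
    _ = μ.toSphere univ * ∫⁻ r : Ioi (0 : ℝ), f r ∂.volumeIoiPow (Module.finrank ℝ E - 1) := by
        rw [lintegral_prod _ (by fun_prop)]
        simp only [lintegral_const, mul_comm]
    _ = _ := by
        rw [Measure.volumeIoiPow, lintegral_withDensity_eq_lintegral_mul _ (by fun_prop)
          (by fun_prop)]
        exact congrArg _ (lintegral_subtype_comap measurableSet_Ioi
          fun r ↦ ENNReal.ofReal (r ^ (Module.finrank ℝ E - 1)) * f r)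

lemma setLIntegral_norm_rpow [Nontrivial E] {a R : ℝ} (ha : 0 < Module.finrank ℝ E + a)
    (hR : 0 ≤ R) :
    ∫⁻ z in {z : E | ‖z‖ ∈ Ioc 0 R}, ENNReal.ofReal (‖z‖ ^ a) ∂μ =
      μ.toSphere univ *
        ENNReal.ofReal (R ^ (Module.finrank ℝ E + a) / (Module.finrank ℝ E + a)) := by
  have radial_density : EqOn
      (fun r ↦ ENNReal.ofReal (r ^ (Module.finrank ℝ E - 1)) * ENNReal.ofReal (r ^ a))
      (fun r ↦ ENNReal.ofReal (r ^ (Module.finrank ℝ E - 1 + a))) (Ioc 0 R) := by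
    intro r hr
    simp only
    rw [← ENNReal.ofReal_mul (pow_nonneg hr.1.le _), ← Real.rpow_natCast,
      ← Real.rpow_add hr.1, Nat.cast_pred Module.finrank_pos]
  calc ∫⁻ z in {z : E | ‖z‖ ∈ Ioc 0 R}, ENNReal.ofReal (‖z‖ ^ a) ∂μ
      = ∫⁻ z, (Ioc 0 R).indicator (fun r ↦ ENNReal.ofReal (r ^ a)) ‖z‖ ∂μ :=
        (lintegral_indicator (measurable_norm measurableSet_Ioc) _).symm
    _ = μ.toSphere univ * ∫⁻ r in Ioc 0 R,
          ENNReal.ofReal (r ^ (Module.finrank ℝ E - 1)) * ENNReal.ofReal (r ^ a) := by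
        rw [lintegral_fun_norm_addHaar μ (.indicator (by fun_prop) measurableSet_Ioc)]
        simp_rw [← indicator_mul_right _ (fun r ↦ ENNReal.ofReal (r ^ (Module.finrank ℝ E - 1)))]
        rw [setLIntegral_indicator measurableSet_Ioc,
          inter_eq_self_of_subset_left Ioc_subset_Ioi_self]
    _ = _ := by
        rw [setLIntegral_congr_fun measurableSet_Ioc radial_density,
          setLIntegral_Ioc_rpow (by linarith) hR]
        ring_nf

lemma lintegral_slobodeckij_le_of_shift_le [Nontrivial E] {F : Type*} [NormedAddCommGroup F]
    {v : E → F} (hv : StronglyMeasurable v) {Q : Set E} (hQ : Bornology.IsBounded Q)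
    {R β s : ℝ} (hR : Metric.diam Q ≤ R) (hs : 2 * s < β) {M : ℝ≥0∞}
    (hshift : ∀ z, ‖z‖ ∈ Ioc 0 R →
      ∫⁻ x in Q, ENNReal.ofReal (‖v x - v (x + z)‖ ^ 2) ∂μ ≤ M * ENNReal.ofReal (‖z‖ ^ β)) :
    ∫⁻ x in Q, ∫⁻ y in Q \ {x},
        ENNReal.ofReal (‖v x - v y‖ ^ 2 / ‖x - y‖ ^ (Module.finrank ℝ E + 2 * s)) ∂μ ∂μ ≤
      M * (μ.toSphere univ * ENNReal.ofReal (R ^ (β - 2 * s) / (β - 2 * s))) := by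
  set p : ℝ := Module.finrank ℝ E + 2 * s
  have kernel_measurable : Measurable
      (Function.uncurry fun x y ↦ ENNReal.ofReal (‖v x - v y‖ ^ 2 / ‖x - y‖ ^ p)) := by
    have : Measurable fun w : E × E ↦ ‖v w.1 - v w.2‖ :=
      ((hv.comp_measurable measurable_fst).sub (hv.comp_measurable measurable_snd)).norm.measurable
    unfold Function.uncurry
    fun_prop
  have shift_weighted_le : ∀ z ∈ {z : E | ‖z‖ ∈ Ioc 0 R},
      ∫⁻ x in Q, ENNReal.ofReal (‖v x - v (x + z)‖ ^ 2 / ‖x - (x + z)‖ ^ p) ∂μ ≤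
        M * ENNReal.ofReal (‖z‖ ^ (β - p)) := by
    intro z hz
    have hzp : 0 < ‖z‖ ^ p := Real.rpow_pos_of_pos hz.1 p
    simp only [sub_add_cancel_left, norm_neg, ENNReal.ofReal_div_of_pos hzp]
    simp only [div_eq_mul_inv]
    rw [lintegral_mul_const' _ _ (by simpa using hzp)]
    grw [hshift z hz]
    rw [Real.rpow_sub hz.1, ENNReal.ofReal_div_of_pos hzp, mul_assoc, div_eq_mul_inv]
  calc _ ≤ ∫⁻ z in {z | ‖z‖ ∈ Ioc 0 R},
          ∫⁻ x in Q, ENNReal.ofReal (‖v x - v (x + z)‖ ^ 2 / ‖x - (x + z)‖ ^ p) ∂μ ∂μ :=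
        setLIntegral_setLIntegral_diff_singleton_le μ hQ hR kernel_measurable
    _ ≤ ∫⁻ z in {z | ‖z‖ ∈ Ioc 0 R}, M * ENNReal.ofReal (‖z‖ ^ (β - p)) ∂μ :=
        setLIntegral_mono' (measurable_norm measurableSet_Ioc) shift_weighted_le
    _ = M * (μ.toSphere univ * ENNReal.ofReal (R ^ (β - 2 * s) / (β - 2 * s))) := by
        have dim_add : Module.finrank ℝ E + (β - p) = β - 2 * s := by ring
        rw [lintegral_const_mul _ (by fun_prop), setLIntegral_norm_rpow μ (by linarith)
          (Metric.diam_nonneg.trans hR), dim_add]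

end Polar

theorem fractional_sobolev_seminorm_bound_general {E F : Type*} [NormedAddCommGroup E]
    [InnerProductSpace ℝ E] [FiniteDimensional ℝ E] [Nontrivial E] [MeasurableSpace E]
    [BorelSpace E] [NormedAddCommGroup F] {Q : Set E} (hQ : Bornology.IsBounded Q) {R : ℝ}
    (hR : Metric.diam Q ≤ R) {C A B : ℝ} (hC : 0 ≤ C) (hA : 0 ≤ A) (hB : 0 ≤ B)
    {v : E → F} (hv : StronglyMeasurable v)
    (hshift : ∀ e : E, ‖e‖ = 1 → ∀ η ∈ Ioc 0 R,
      ∫⁻ x in Q, ENNReal.ofReal (‖v x - v (x + η • e)‖ ^ 2) ≤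
        ENNReal.ofReal (η * C * (η * A + B)))
    {s : ℝ} (hs : s < 1 / 2) :
    ∫⁻ x in Q, ∫⁻ y in Q \ {x},
        ENNReal.ofReal (‖v x - v y‖ ^ 2 / ‖x - y‖ ^ ((Module.finrank ℝ E : ℝ) + 2 * s)) ≤
      ENNReal.ofReal (C * max R 1) *
        μH[(Module.finrank ℝ E : ℝ) - 1] (Metric.sphere (0 : E) 1) *
        ENNReal.ofReal (R ^ (1 - 2 * s) / (1 - 2 * s)) * ENNReal.ofReal (A + B) := by
  have shift_le : ∀ z, ‖z‖ ∈ Ioc 0 R → ∫⁻ x in Q, ENNReal.ofReal (‖v x - v (x + z)‖ ^ 2) ≤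
      ENNReal.ofReal (C * max R 1 * (A + B)) * ENNReal.ofReal (‖z‖ ^ (1 : ℝ)) := by
    intro z hz
    have hz₀ : z ≠ 0 := norm_pos_iff.1 hz.1
    have affine_le : ‖z‖ * A + B ≤ max R 1 * (A + B) := by
      rw [mul_add]
      gcongr
      exacts [hz.2.trans (le_max_left R 1), le_mul_of_one_le_left hB (le_max_right R 1)]
    have := hshift (‖z‖⁻¹ • z) (norm_smul_inv_norm hz₀) ‖z‖ hz
    rw [smul_inv_smul₀ hz.1.ne'] at this
    grw [this, affine_le, ← ENNReal.ofReal_mul (by positivity), Real.rpow_one]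
    exact (congrArg _ (by ring)).le
  calc _ ≤ ENNReal.ofReal (C * max R 1 * (A + B)) * ((volume : Measure E).toSphere univ *
          ENNReal.ofReal (R ^ (1 - 2 * s) / (1 - 2 * s))) :=
        lintegral_slobodeckij_le_of_shift_le volume hv hQ hR (by linarith) shift_le
    _ ≤ ENNReal.ofReal (C * max R 1 * (A + B)) *
          (μH[(Module.finrank ℝ E : ℝ) - 1] (Metric.sphere (0 : E) 1) *
            ENNReal.ofReal (R ^ (1 - 2 * s) / (1 - 2 * s))) := by
        grw [toSphere_univ_le_hausdorffMeasure_sphere]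
    _ = _ := by
        rw [ENNReal.ofReal_mul (by positivity)]
        ring

theorem fractional_sobolev_seminorm_bound
    (d : ℕ) (hd : 1 ≤ d)
    (Q : Set (EuclideanSpace ℝ (Fin d)))
    (hQb : Bornology.IsBounded Q) (hQm : MeasurableSet Q)
    (R : ℝ) (hR : R = Metric.diam Q) (hRpos : 0 < R)
    (c : ℝ) (hc : 0 < c) (A B : ℝ) (hA : 0 ≤ A) (hB : 0 ≤ B)
    (v : EuclideanSpace ℝ (Fin d) → ℝ) (hv : Measurable v)
    (hshift : ∀ e : EuclideanSpace ℝ (Fin d), ‖e‖ = 1 → ∀ η ∈ Set.Ioc (0:ℝ) R,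
      ∫⁻ x in Q, ENNReal.ofReal (|v x - v (x + η • e)| ^ 2) ≤
        ENNReal.ofReal (η * (1 + 1 / c) * (η * A + B))) :
    ∀ s : ℝ, s ∈ Set.Ico (0:ℝ) (1/2) →
      ∫⁻ x in Q, ∫⁻ y in Q \ {x},
          ENNReal.ofReal (|v x - v y| ^ 2 / ‖x - y‖ ^ ((d : ℝ) + 2 * s)) ≤
        ENNReal.ofReal ((1 + 1 / c) * max R 1) *
          μH[(d : ℝ) - 1] (Metric.sphere (0 : EuclideanSpace ℝ (Fin d)) 1) *
          ENNReal.ofReal (R ^ (1 - 2 * s) / (1 - 2 * s)) *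
          ENNReal.ofReal (A + B) := by
  intro s hs
  have : Nonempty (Fin d) := Fin.pos_iff_nonempty.1 hd
  simpa only [finrank_euclideanSpace_fin, Real.norm_eq_abs] using
    fractional_sobolev_seminorm_bound_general hQb hR.ge (by positivity) hA hB
      hv.stronglyMeasurable hshift hs.2
end
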